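/- The integral R_C(0, 1/2) = ∫_0^∞ cos(πx/2)/(exp(2π√x) − 1) dx converges and equals 1/(4π). -/

import Mathlib

open MeasureTheory Real Set

/-!
Substituting `x = t²` and integrating by parts turns the integral of
`exp(iπx/2) / (exp(2π√x) - 1)` over `(0, ∞)` into `-i` times the integral of
`F(t) = (exp(iπt²/2) - 1) / sinh²(πt)`. There is a meromorphic `Q` with `Q(z + i) - Q(z) = F(z)`
and `Q(i - z) = -Q(z)`. Both relations persist when a multiple of `coth(πz)` is added to `Q`, and
for one choice of the multiple the singularities of `Q` at `0` and `i` are removable. By Cauchy's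
theorem on the rectangle with vertices `0`, `T`, `T + i`, `i`, the integral of `F` over `(0, T)` is
then `i` times the integral of `Q` up the right side: the left side contributes nothing, by
antisymmetry. As `T → ∞`, `Q` tends to the coefficient of `coth(πz)`, which is the value sought.
-/

open Complex (I re im)
open Filter Topology
open scoped Interval

section SquareSubstitution

variable {E : Type*} [NormedAddCommGroup E] [NormedSpace ℝ E]

theorem integrableOn_Ioi_comp_sq_iff (f : ℝ → E) :
    IntegrableOn (fun t ↦ (2 * t) • f (t ^ 2)) (Ioi 0) ↔ IntegrableOn f (Ioi 0) := by
  rw [← integrableOn_Ioi_comp_rpow_iff f two_ne_zero]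
  norm_num

theorem integral_Ioi_comp_sq (f : ℝ → E) :
    ∫ t in Ioi 0, (2 * t) • f (t ^ 2) = ∫ x in Ioi 0, f x := by
  rw [← integral_comp_rpow_Ioi_of_pos (g := f) zero_lt_two]
  norm_num

end SquareSubstitution

section RemovableSingularities

theorem ae_comp_eq_of_countable_ne {α β : Type*} {f g : α → β} {γ : ℝ → α} (hγ : γ.Injective)
    {U : Set α} (hfg : {z | z ∈ U ∧ f z ≠ g z}.Countable) {a b : ℝ} (hmaps : MapsTo γ [[a, b]] U) :
    ∀ᵐ t, t ∈ Ι a b → f (γ t) = g (γ t) := by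
  filter_upwards [(hfg.preimage hγ).ae_notMem volume] with t ht htab
  by_contra hne
  exact ht ⟨hmaps (uIoc_subset_uIcc htab), hne⟩

variable {E : Type*} [NormedAddCommGroup E] [NormedSpace ℂ E]

theorem meromorphicOrderAt_nonneg_of_tendsto_sub_smul {f : ℂ → E} {c : ℂ}
    (hf : MeromorphicAt f c) (h : Tendsto (fun z ↦ (z - c) • f z) (𝓝[≠] c) (𝓝 0)) :
    0 ≤ meromorphicOrderAt f c := by
  have hid : MeromorphicAt (fun z : ℂ ↦ z - c) c := by fun_prop
  have hpos : 0 < meromorphicOrderAt ((fun z ↦ z - c) • f) c :=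
    (tendsto_zero_iff_meromorphicOrderAt_pos (hid.smul hf)).1 h
  rw [meromorphicOrderAt_smul hid hf, meromorphicOrderAt_id_sub_const] at hpos
  cases hn : meromorphicOrderAt f c with
  | top => exact le_top
  | coe n =>
    rw [hn] at hpos
    norm_cast at hpos ⊢
    lia

theorem exists_analyticOnNhd_countable_ne {f : ℂ → E} {U : Set ℂ}
    (hf : MeromorphicOn f U) (hord : ∀ z ∈ U, 0 ≤ meromorphicOrderAt f z) :
    ∃ g : ℂ → E, AnalyticOnNhd ℂ g U ∧ {z | z ∈ U ∧ f z ≠ g z}.Countable := by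
  refine ⟨toMeromorphicNFOn f U, fun z hz ↦ ?_, ?_⟩
  · rw [← (meromorphicNFOn_toMeromorphicNFOn f U hz).meromorphicOrderAt_nonneg_iff_analyticAt,
      meromorphicOrderAt_toMeromorphicNFOn hf hz]
    exact hord z hz
  · have hdiscrete : IsDiscrete ({z | f z ≠ toMeromorphicNFOn f U z} ∩ U) :=
      isDiscrete_of_codiscreteWithin <|
        (toMeromorphicNFOn_eqOn_codiscrete hf).mono fun z hz ↦ not_not_intro hz
    exact ((HereditarilyLindelofSpace.isLindelof _).countable_of_isDiscrete hdiscrete).mono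
      fun z hz ↦ hz.symm

theorem mapsTo_add_ofReal_mul_I_reProdIm (z w : ℂ) {x : ℝ} (hx : x ∈ [[z.re, w.re]]) :
    MapsTo (fun y : ℝ ↦ (x + y * I : ℂ)) [[z.im, w.im]] ([[z.re, w.re]] ×ℂ [[z.im, w.im]]) :=
  fun y hy ↦ by simp [Complex.mem_reProdIm, hx, hy]

theorem mapsTo_ofReal_add_mul_I_reProdIm (z w : ℂ) {y : ℝ} (hy : y ∈ [[z.im, w.im]]) :
    MapsTo (fun x : ℝ ↦ (x + y * I : ℂ)) [[z.re, w.re]] ([[z.re, w.re]] ×ℂ [[z.im, w.im]]) :=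
  fun x hx ↦ by simp [Complex.mem_reProdIm, hx, hy]

theorem injective_ofReal_add_mul_I (y : ℝ) : (fun x : ℝ ↦ (x + y * I : ℂ)).Injective :=
  fun a b h ↦ by simpa using h

theorem injective_add_ofReal_mul_I (x : ℝ) : (fun y : ℝ ↦ (x + y * I : ℂ)).Injective :=
  fun a b h ↦ by simpa using h

variable {f : ℂ → E} {z w : ℂ}

theorem intervalIntegrable_horizontal_of_meromorphicOrderAt_nonneg
    (hf : MeromorphicOn f ([[z.re, w.re]] ×ℂ [[z.im, w.im]]))
    (hord : ∀ u ∈ [[z.re, w.re]] ×ℂ [[z.im, w.im]], 0 ≤ meromorphicOrderAt f u)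
    {y : ℝ} (hy : y ∈ [[z.im, w.im]]) :
    IntervalIntegrable (fun x : ℝ ↦ f (x + y * I)) volume z.re w.re := by
  obtain ⟨g, hg, hfg⟩ := exists_analyticOnNhd_countable_ne hf hord
  have hmaps := mapsTo_ofReal_add_mul_I_reProdIm z w hy
  have hcont : ContinuousOn (fun x : ℝ ↦ g (x + y * I)) [[z.re, w.re]] :=
    hg.continuousOn.comp (by fun_prop) hmaps
  refine hcont.intervalIntegrable.congr_ae ((ae_restrict_iff' measurableSet_uIoc).2 ?_)
  filter_upwards [ae_comp_eq_of_countable_ne (injective_ofReal_add_mul_I y) hfg hmaps]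
    with x hx hxab using (hx hxab).symm

theorem integral_boundary_rect_eq_zero_of_meromorphicOrderAt_nonneg
    (hf : MeromorphicOn f ([[z.re, w.re]] ×ℂ [[z.im, w.im]]))
    (hord : ∀ u ∈ [[z.re, w.re]] ×ℂ [[z.im, w.im]], 0 ≤ meromorphicOrderAt f u) :
    (∫ x : ℝ in z.re..w.re, f (x + z.im * I)) - (∫ x : ℝ in z.re..w.re, f (x + w.im * I)) +
      I • (∫ y : ℝ in z.im..w.im, f (w.re + y * I)) -
      I • (∫ y : ℝ in z.im..w.im, f (z.re + y * I)) = 0 := by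
  obtain ⟨g, hg, hfg⟩ := exists_analyticOnNhd_countable_ne hf hord
  have horizontal {y : ℝ} (hy : y ∈ [[z.im, w.im]]) :
      ∫ x : ℝ in z.re..w.re, f (x + y * I) = ∫ x : ℝ in z.re..w.re, g (x + y * I) :=
    intervalIntegral.integral_congr_ae <| ae_comp_eq_of_countable_ne
      (injective_ofReal_add_mul_I y) hfg (mapsTo_ofReal_add_mul_I_reProdIm z w hy)
  have vertical {x : ℝ} (hx : x ∈ [[z.re, w.re]]) :
      ∫ y : ℝ in z.im..w.im, f (x + y * I) = ∫ y : ℝ in z.im..w.im, g (x + y * I) :=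
    intervalIntegral.integral_congr_ae <| ae_comp_eq_of_countable_ne
      (injective_add_ofReal_mul_I x) hfg (mapsTo_add_ofReal_mul_I_reProdIm z w hx)
  rw [horizontal left_mem_uIcc, horizontal right_mem_uIcc, vertical left_mem_uIcc,
    vertical right_mem_uIcc]
  exact Complex.integral_boundary_rect_eq_zero_of_differentiableOn g z w hg.differentiableOn

end RemovableSingularities

section SlopesAtZero

theorem tendsto_sinh_mul_div_nhdsNE_zero (a : ℂ) :
    Tendsto (fun z ↦ Complex.sinh (a * z) / z) (𝓝[≠] 0) (𝓝 a) := by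
  have h : HasDerivAt (fun z ↦ Complex.sinh (a * z)) a 0 := by
    simpa using ((hasDerivAt_id (0 : ℂ)).const_mul a).csinh
  simpa [div_eq_inv_mul] using h.tendsto_slope_zero

theorem tendsto_cosh_mul_sub_one_div_sq_nhdsNE_zero (a : ℂ) :
    Tendsto (fun z ↦ (Complex.cosh (a * z) - 1) / z ^ 2) (𝓝[≠] 0) (𝓝 (a ^ 2 / 2)) := by
  have h := ((tendsto_sinh_mul_div_nhdsNE_zero (a / 2)).pow 2).const_mul 2
  convert h using 2 with z
  · have hcosh : Complex.cosh (a * z) = 1 + 2 * Complex.sinh (a / 2 * z) ^ 2 := by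
      rw [show a * z = 2 * (a / 2 * z) by ring, Complex.cosh_two_mul, Complex.cosh_sq]
      ring
    rw [hcosh, div_pow]
    ring
  · ring

theorem tendsto_exp_mul_sq_sub_one_div_sq_nhdsNE_zero (a : ℂ) :
    Tendsto (fun z ↦ (Complex.exp (a * z ^ 2) - 1) / z ^ 2) (𝓝[≠] 0) (𝓝 a) := by
  have h : HasDerivAt (fun z ↦ Complex.exp (a * z)) a 0 := by
    simpa using ((hasDerivAt_id (0 : ℂ)).const_mul a).cexp
  have hsq : Tendsto (fun z : ℂ ↦ z ^ 2) (𝓝[≠] 0) (𝓝[≠] 0) :=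
    tendsto_nhdsWithin_iff.2 ⟨((continuous_pow 2).tendsto' 0 0 (by simp)).mono_left inf_le_left,
      eventually_mem_nhdsWithin.mono fun z hz ↦ pow_ne_zero 2 hz⟩
  simpa [div_eq_inv_mul, Function.comp_def] using h.tendsto_slope_zero.comp hsq

end SlopesAtZero

section HyperbolicAsymptotics

variable {ι : Type*} {l : Filter ι} {f : ι → ℂ}

theorem tendsto_exp_neg_of_tendsto_re_atTop (hf : Tendsto (fun i ↦ (f i).re) l atTop) :
    Tendsto (fun i ↦ Complex.exp (-f i)) l (𝓝 0) :=
  Complex.tendsto_exp_comap_re_atBot.comp <| tendsto_comap_iff.2 <|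
    tendsto_neg_atTop_atBot.comp hf

theorem tendsto_exp_div_sinh_of_tendsto_re_atTop (hf : Tendsto (fun i ↦ (f i).re) l atTop) :
    Tendsto (fun i ↦ Complex.exp (f i) / Complex.sinh (f i)) l (𝓝 2) := by
  have h := (tendsto_const_nhds (x := (2 : ℂ))).div
    (((tendsto_exp_neg_of_tendsto_re_atTop hf).pow 2).const_sub 1) (by simp)
  refine (h.congr fun i ↦ ?_).trans (by simp)
  have hexp := Complex.exp_ne_zero (f i)
  simp only [Pi.div_apply, Complex.sinh, Complex.exp_neg]
  field_simp

theorem tendsto_inv_sinh_of_tendsto_re_atTop (hf : Tendsto (fun i ↦ (f i).re) l atTop) :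
    Tendsto (fun i ↦ (Complex.sinh (f i))⁻¹) l (𝓝 0) := by
  have h := (tendsto_exp_neg_of_tendsto_re_atTop hf).mul
    (tendsto_exp_div_sinh_of_tendsto_re_atTop hf)
  rw [zero_mul] at h
  refine h.congr fun i ↦ ?_
  rw [mul_div, ← Complex.exp_add, neg_add_cancel, Complex.exp_zero, one_div]

theorem tendsto_cosh_div_sinh_of_tendsto_re_atTop (hf : Tendsto (fun i ↦ (f i).re) l atTop) :
    Tendsto (fun i ↦ Complex.cosh (f i) / Complex.sinh (f i)) l (𝓝 1) := by
  have h := ((tendsto_exp_div_sinh_of_tendsto_re_atTop hf).add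
    ((tendsto_exp_neg_of_tendsto_re_atTop hf).mul
      (tendsto_inv_sinh_of_tendsto_re_atTop hf))).div_const 2
  convert h using 2 with i
  · rw [Complex.cosh]
    ring
  · norm_num

end HyperbolicAsymptotics

section ExponentialBounds

theorem exp_two_mul_sub_one_eq_mul_sinh (w : ℂ) :
    Complex.exp (2 * w) - 1 = 2 * Complex.exp w * Complex.sinh w := by
  rw [Complex.sinh, Complex.exp_neg, two_mul w, Complex.exp_add]
  field_simp

theorem norm_sinh_ofReal {u : ℝ} (hu : 0 ≤ u) : ‖Complex.sinh u‖ = Real.sinh u := by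
  rw [← Complex.ofReal_sinh, Complex.norm_of_nonneg (Real.sinh_nonneg_iff.2 hu)]

theorem mul_exp_half_le_two_mul_sinh {u : ℝ} (hu : 0 ≤ u) :
    u * Real.exp (u / 2) ≤ 2 * Real.sinh u := by
  have hsinh : u / 2 ≤ Real.sinh (u / 2) := Real.self_le_sinh_iff.2 (by positivity)
  have hcosh : Real.exp (u / 2) / 2 ≤ Real.cosh (u / 2) := by
    rw [Real.cosh_eq]
    linarith [Real.exp_pos (-(u / 2))]
  calc u * Real.exp (u / 2) = 4 * ((u / 2) * (Real.exp (u / 2) / 2)) := by ring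
    _ ≤ 4 * (Real.sinh (u / 2) * Real.cosh (u / 2)) := by gcongr
    _ = 2 * Real.sinh (2 * (u / 2)) := by rw [Real.sinh_two_mul]; ring
    _ = 2 * Real.sinh u := by rw [mul_div_cancel₀ u two_ne_zero]

theorem two_mul_mul_exp_le_norm_exp_two_mul_sub_one {u : ℝ} (hu : 0 ≤ u) :
    2 * u * Real.exp u ≤ ‖Complex.exp (2 * u) - 1‖ := by
  rw [exp_two_mul_sub_one_eq_mul_sinh, norm_mul, norm_mul, Complex.norm_ofNat,
    Complex.norm_exp_ofReal, norm_sinh_ofReal hu, mul_right_comm]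
  gcongr
  exact Real.self_le_sinh_iff.2 hu

end ExponentialBounds

section ContourKernel

/-- The Fresnel exponential `exp(iπz²/2)`; its real part on the real axis is `cos(πt²/2)`, the
oscillating factor of Ramanujan's integral after the substitution `x = t²`. -/
noncomputable def fresnelExp (z : ℂ) : ℂ := Complex.exp (π * I * z ^ 2 / 2)

/-- The value of `∫₀^∞ exp(iπx/2) / (exp(2π√x) - 1) dx`, whose real part is `R_C(0, 1/2)`. -/
noncomputable def fresnelValue : ℂ := (1 + (π - 3) * I) / (4 * π)

/-- The function `(exp(iπz²/2) - 1) / sinh²(πz)`, to which Ramanujan's integral reduces by an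
integration by parts. -/
noncomputable def fresnelIntegrand (z : ℂ) : ℂ := (fresnelExp z - 1) / Complex.sinh (π * z) ^ 2

/-- An antidifference of `fresnelIntegrand` with step `I`. The last term is `I`-periodic and makes
the singularity at `0` removable. -/
noncomputable def fresnelKernel (z : ℂ) : ℂ :=
  ((1 - I) * Complex.cosh (π * z) - fresnelExp z * (Complex.exp (π * z) - I)) /
      (2 * Complex.sinh (π * z) ^ 3) +
    I * (z - I / 2) / Complex.sinh (π * z) ^ 2 +
    fresnelValue * (Complex.cosh (π * z) / Complex.sinh (π * z))

theorem differentiable_fresnelExp : Differentiable ℂ fresnelExp := by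
  unfold fresnelExp
  fun_prop

theorem hasDerivAt_fresnelExp (z : ℂ) : HasDerivAt fresnelExp (π * I * z * fresnelExp z) z := by
  have h := (((hasDerivAt_pow 2 z).const_mul (π * I)).div_const 2).cexp
  refine h.congr_deriv ?_
  rw [fresnelExp]
  push_cast
  ring

theorem fresnelExp_neg (z : ℂ) : fresnelExp (-z) = fresnelExp z := by
  simp only [fresnelExp, neg_sq]

theorem fresnelExp_add_I (z : ℂ) :
    fresnelExp (z + I) = -I * fresnelExp z * Complex.exp (-(π * z)) := by
  have hexp : π * I * (z + I) ^ 2 / 2 = -(π / 2 * I) + π * I * z ^ 2 / 2 + -(π * z) := by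
    linear_combination (π * I / 2 + π * z) * Complex.I_sq
  rw [fresnelExp, hexp, Complex.exp_add, Complex.exp_add, Complex.exp_neg (π / 2 * I),
    Complex.exp_pi_div_two_mul_I, Complex.inv_I, fresnelExp]

theorem fresnelExp_I_sub (z : ℂ) :
    fresnelExp (I - z) = -I * fresnelExp z * Complex.exp (π * z) := by
  rw [sub_eq_neg_add, fresnelExp_add_I, fresnelExp_neg, mul_neg, neg_neg]

theorem fresnelKernel_add_I (z : ℂ) :
    fresnelKernel (z + I) = fresnelKernel z + fresnelIntegrand z := by
  simp only [fresnelKernel, fresnelIntegrand, fresnelExp_add_I, mul_add, Complex.sinh_add_pi_mul_I,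
    Complex.cosh_add_pi_mul_I, Complex.exp_add, Complex.exp_pi_mul_I]
  -- When `sinh (π z) = 0` both sides vanish by the convention `x / 0 = 0`.
  rcases eq_or_ne (Complex.sinh (π * z)) 0 with hs | hs
  · simp [hs]
  have hexp : Complex.exp (π * z) * Complex.exp (-(π * z)) = 1 := by
    rw [← Complex.exp_add, add_neg_cancel, Complex.exp_zero]
  have hsinh : 2 * Complex.sinh (π * z) = Complex.exp (π * z) - Complex.exp (-(π * z)) :=
    Complex.two_sinh _
  field_simp
  linear_combination (fresnelExp z * Complex.exp (-(π * z)) + 2 * Complex.sinh (π * z)) *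
    Complex.I_sq + I * fresnelExp z * hexp - fresnelExp z * hsinh

theorem fresnelKernel_I_sub (z : ℂ) : fresnelKernel (I - z) = -fresnelKernel z := by
  have hsinh : Complex.sinh (π * (I - z)) = Complex.sinh (π * z) := by
    rw [mul_sub, ← neg_sub, Complex.sinh_neg, Complex.sinh_sub_pi_mul_I, neg_neg]
  have hcosh : Complex.cosh (π * (I - z)) = -Complex.cosh (π * z) := by
    rw [mul_sub, ← neg_sub, Complex.cosh_neg, Complex.cosh_sub_pi_mul_I]
  have hexp : Complex.exp (π * (I - z)) = -Complex.exp (-(π * z)) := by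
    rw [mul_sub, sub_eq_add_neg, Complex.exp_add, Complex.exp_pi_mul_I, neg_one_mul]
  have hexp_mul : Complex.exp (π * z) * Complex.exp (-(π * z)) = 1 := by
    rw [← Complex.exp_add, add_neg_cancel, Complex.exp_zero]
  simp only [fresnelKernel, fresnelExp_I_sub, hsinh, hcosh, hexp]
  rcases eq_or_ne (Complex.sinh (π * z)) 0 with hs | hs
  · simp [hs]
  field_simp
  linear_combination -(fresnelExp z * Complex.exp (π * z)) * Complex.I_sq -
    I * fresnelExp z * hexp_mul

theorem mul_fresnelKernel_eq {z : ℂ} (hz : z ≠ 0) (hs : Complex.sinh (π * z) ≠ 0) :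
    z * fresnelKernel z =
      (-I * ((Complex.cosh (π * z) - 1) / z ^ 2) -
            (fresnelExp z - 1) / z ^ 2 * (Complex.exp (π * z) - I)) /
          (2 * (Complex.sinh (π * z) / z) ^ 3) +
        I / (Complex.sinh (π * z) / z) ^ 2 +
        fresnelValue * (Complex.cosh (π * z) / (Complex.sinh (π * z) / z)) := by
  rw [fresnelKernel, ← Complex.cosh_add_sinh]
  generalize Complex.sinh (π * z) = s at hs ⊢
  field_simp
  linear_combination (-s) * Complex.I_sq

theorem tendsto_mul_fresnelKernel_nhdsNE_zero :
    Tendsto (fun z ↦ z * fresnelKernel z) (𝓝[≠] 0) (𝓝 0) := by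
  have hπ : (π : ℂ) ≠ 0 := Complex.ofReal_ne_zero.2 pi_ne_zero
  have hsinh := tendsto_sinh_mul_div_nhdsNE_zero π
  have hcosh : Tendsto (fun z : ℂ ↦ Complex.cosh (π * z)) (𝓝[≠] 0) (𝓝 1) :=
    (Continuous.tendsto' (by fun_prop) 0 1 (by simp)).mono_left inf_le_left
  have hexp : Tendsto (fun z : ℂ ↦ Complex.exp (π * z)) (𝓝[≠] 0) (𝓝 1) :=
    (Continuous.tendsto' (by fun_prop) 0 1 (by simp)).mono_left inf_le_left
  have hfresnel : Tendsto (fun z ↦ (fresnelExp z - 1) / z ^ 2) (𝓝[≠] 0) (𝓝 (π * I / 2)) := by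
    simpa only [fresnelExp, mul_div_right_comm] using
      tendsto_exp_mul_sq_sub_one_div_sq_nhdsNE_zero (π * I / 2)
  have hlim := (((((tendsto_cosh_mul_sub_one_div_sq_nhdsNE_zero π).const_mul (-I)).sub
    (hfresnel.mul (hexp.sub_const I))).div ((hsinh.pow 3).const_mul 2) (by simp)).add
    ((tendsto_const_nhds (x := I)).div (hsinh.pow 2) (by simp))).add
    ((hcosh.div hsinh hπ).const_mul fresnelValue)
  convert hlim.congr' ?_ using 2
  -- The residues at `0` of the three terms of the kernel cancel; this determines `fresnelValue`.
  · rw [fresnelValue]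
    field_simp
    linear_combination -4 * Complex.I_sq
  · filter_upwards [self_mem_nhdsWithin, hsinh.eventually_ne hπ] with z hz hs
    exact (mul_fresnelKernel_eq hz fun h ↦ hs (by simp [h])).symm

theorem tendsto_sub_mul_fresnelKernel_nhdsNE_I :
    Tendsto (fun z ↦ (z - I) * fresnelKernel z) (𝓝[≠] I) (𝓝 0) := by
  have hsub : Tendsto (fun z ↦ I - z) (𝓝[≠] I) (𝓝[≠] 0) :=
    tendsto_nhdsWithin_iff.2
      ⟨(Continuous.tendsto' (by fun_prop) I 0 (sub_self I)).mono_left inf_le_left,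
        eventually_mem_nhdsWithin.mono fun z hz ↦ sub_ne_zero.2 (Ne.symm hz)⟩
  refine (tendsto_mul_fresnelKernel_nhdsNE_zero.comp hsub).congr fun z ↦ ?_
  rw [Function.comp_apply, fresnelKernel_I_sub]
  ring

theorem sinh_pi_mul_eq_zero_iff {z : ℂ} :
    Complex.sinh (π * z) = 0 ↔ ∃ n : ℤ, z = n * I := by
  obtain ⟨w, rfl⟩ : ∃ w, z = w * I := ⟨-(z * I), by linear_combination z * Complex.I_sq⟩
  rw [← mul_assoc, Complex.sinh_mul_I, mul_eq_zero_iff_right Complex.I_ne_zero,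
    Complex.sin_eq_zero_iff]
  simp [mul_comm (π : ℂ), pi_ne_zero]

theorem meromorphicAt_fresnelKernel (z : ℂ) : MeromorphicAt fresnelKernel z := by
  have := differentiable_fresnelExp.analyticAt z
  unfold fresnelKernel
  fun_prop

theorem analyticAt_fresnelKernel {z : ℂ} (hs : Complex.sinh (π * z) ≠ 0) :
    AnalyticAt ℂ fresnelKernel z := by
  have := differentiable_fresnelExp.analyticAt z
  unfold fresnelKernel
  fun_prop (disch := simpa)

theorem meromorphicOrderAt_fresnelKernel_nonneg {z : ℂ} (hz : z.im ∈ Icc 0 1) :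
    0 ≤ meromorphicOrderAt fresnelKernel z := by
  by_cases hs : Complex.sinh (π * z) = 0
  · obtain ⟨n, rfl⟩ := sinh_pi_mul_eq_zero_iff.1 hs
    have hn : 0 ≤ n ∧ n ≤ 1 := by
      simp only [Complex.mul_I_im, Complex.intCast_re, mem_Icc] at hz
      exact_mod_cast hz
    obtain rfl | rfl : n = 0 ∨ n = 1 := by lia
    all_goals
      refine meromorphicOrderAt_nonneg_of_tendsto_sub_smul (meromorphicAt_fresnelKernel _) ?_
    · simpa using tendsto_mul_fresnelKernel_nhdsNE_zero
    · simpa using tendsto_sub_mul_fresnelKernel_nhdsNE_I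
  · exact (analyticAt_fresnelKernel hs).meromorphicOrderAt_nonneg

theorem norm_fresnelExp (z : ℂ) : ‖fresnelExp z‖ = Real.exp (-(π * z.re * z.im)) := by
  rw [fresnelExp, Complex.norm_exp]
  congr 1
  simp [sq]
  ring

theorem tendsto_fresnelKernel_of_tendsto_re_atTop {l : Filter ℂ} (hre : Tendsto re l atTop)
    (him : ∀ᶠ z in l, z.im ∈ Icc 0 1) : Tendsto fresnelKernel l (𝓝 fresnelValue) := by
  have hl : Complex.IsExpCmpFilter l :=
    .of_boundedUnder_im hre ⟨1, him.mono fun z hz ↦ hz.2⟩ ⟨0, him.mono fun z hz ↦ hz.1⟩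
  have hπre : Tendsto (fun z : ℂ ↦ (π * z).re) l atTop := by
    simpa only [Complex.re_ofReal_mul] using hre.const_mul_atTop pi_pos
  have hexp := tendsto_exp_div_sinh_of_tendsto_re_atTop hπre
  have hinv := tendsto_inv_sinh_of_tendsto_re_atTop hπre
  have hcoth := tendsto_cosh_div_sinh_of_tendsto_re_atTop hπre
  have hid : Tendsto (fun z : ℂ ↦ z * (Complex.sinh (π * z))⁻¹) l (𝓝 0) := by
    have h := (hl.isLittleO_pow_mul_exp pi_pos 1 0).tendsto_div_nhds_zero.mul hexp
    rw [zero_mul] at h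
    refine h.congr fun z ↦ ?_
    have := Complex.exp_ne_zero (π * z)
    simp only [pow_one, pow_zero, Complex.ofReal_zero, zero_mul, Complex.exp_zero]
    field_simp
  have hfresnel : Tendsto (fun z ↦ fresnelExp z * (Complex.sinh (π * z))⁻¹) l (𝓝 0) := by
    refine isBoundedUnder_le_mul_tendsto_zero ⟨1, eventually_map.2 ?_⟩ hinv
    filter_upwards [him, hre.eventually_ge_atTop 0] with z hz hz0
    simpa [norm_fresnelExp] using mul_nonneg (mul_nonneg pi_nonneg hz0) hz.1
  have hlim := ((((hcoth.const_mul ((1 - I) / 2)).mul (hinv.pow 2)).sub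
    (((hfresnel.mul hinv).mul (hexp.sub (hinv.const_mul I))).div_const 2)).add
    (((hid.sub (hinv.const_mul (I / 2))).mul hinv).const_mul I)).add (hcoth.const_mul fresnelValue)
  convert hlim using 2 with z
  · simp only [fresnelKernel, div_eq_mul_inv, mul_inv]
    ring
  · ring

theorem tendsto_integral_fresnelKernel :
    Tendsto (fun T : ℝ ↦ ∫ y in (0 : ℝ)..1, fresnelKernel (T + y * I)) atTop (𝓝 fresnelValue) := by
  have hunif : TendstoUniformlyOn (fun (T y : ℝ) ↦ fresnelKernel (T + y * I))
      (fun _ ↦ fresnelValue) atTop [[0, 1]] := by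
    rw [← tendsto_prod_principal_iff, uIcc_of_le zero_le_one]
    have hstrip : ∀ᶠ p : ℝ × ℝ in atTop ×ˢ 𝓟 (Icc 0 1), p.2 ∈ Icc 0 1 :=
      tendsto_snd.eventually (mem_principal_self _)
    exact (tendsto_fresnelKernel_of_tendsto_re_atTop
      (l := map (fun p : ℝ × ℝ ↦ (p.1 + p.2 * I : ℂ)) (atTop ×ˢ 𝓟 (Icc 0 1)))
      (by simpa [Function.comp_def] using tendsto_fst) (by simpa using hstrip)).comp tendsto_map
  have hcont : ∀ᶠ T : ℝ in atTop,
      ContinuousOn (fun y : ℝ ↦ fresnelKernel (T + y * I)) [[0, 1]] := by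
    filter_upwards [eventually_gt_atTop 0] with T hT y _
    have hs : Complex.sinh (π * (T + y * I)) ≠ 0 := fun h ↦ by
      obtain ⟨n, hn⟩ := sinh_pi_mul_eq_zero_iff.1 h
      exact hT.ne' (by simpa using congrArg re hn)
    exact ((analyticAt_fresnelKernel hs).continuousAt.comp (f := fun y : ℝ ↦ (T + y * I : ℂ))
      (by fun_prop)).continuousWithinAt
  simpa using hunif.tendsto_intervalIntegral_of_continuousOn (μ := volume) hcont

theorem integral_fresnelKernel_mul_I_eq_zero : ∫ y in (0 : ℝ)..1, fresnelKernel (y * I) = 0 := by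
  have h := intervalIntegral.integral_comp_sub_left (a := 0) (b := 1)
    (fun y : ℝ ↦ fresnelKernel (y * I)) 1
  have hanti (y : ℝ) : fresnelKernel ((1 - y : ℝ) * I) = -fresnelKernel (y * I) := by
    rw [← fresnelKernel_I_sub]
    push_cast
    ring_nf
  simp only [hanti, intervalIntegral.integral_neg, sub_self, sub_zero] at h
  exact self_eq_neg.1 h.symm

theorem integral_fresnelIntegrand_eq (T : ℝ) :
    ∫ x in (0 : ℝ)..T, fresnelIntegrand x = I * ∫ y in (0 : ℝ)..1, fresnelKernel (T + y * I) := by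
  have hmer : MeromorphicOn fresnelKernel
      ([[(0 : ℂ).re, (T + I).re]] ×ℂ [[(0 : ℂ).im, (T + I).im]]) :=
    fun z _ ↦ meromorphicAt_fresnelKernel z
  have hord : ∀ z ∈ [[(0 : ℂ).re, (T + I).re]] ×ℂ [[(0 : ℂ).im, (T + I).im]],
      0 ≤ meromorphicOrderAt fresnelKernel z := fun z hz ↦
    meromorphicOrderAt_fresnelKernel_nonneg (by simpa using (Complex.mem_reProdIm.1 hz).2)
  have hbottom : IntervalIntegrable (fun x : ℝ ↦ fresnelKernel x) volume 0 T := by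
    simpa using intervalIntegrable_horizontal_of_meromorphicOrderAt_nonneg hmer hord left_mem_uIcc
  have htop : IntervalIntegrable (fun x : ℝ ↦ fresnelKernel (x + I)) volume 0 T := by
    simpa using intervalIntegrable_horizontal_of_meromorphicOrderAt_nonneg hmer hord right_mem_uIcc
  have hboundary : (∫ x in (0 : ℝ)..T, fresnelKernel x) - (∫ x in (0 : ℝ)..T, fresnelKernel (x + I))
      + I * ∫ y in (0 : ℝ)..1, fresnelKernel (T + y * I) = 0 := by
    simpa [integral_fresnelKernel_mul_I_eq_zero] using
      integral_boundary_rect_eq_zero_of_meromorphicOrderAt_nonneg hmer hord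
  calc ∫ x in (0 : ℝ)..T, fresnelIntegrand x
      = ∫ x in (0 : ℝ)..T, (fresnelKernel (x + I) - fresnelKernel x) := by
        simp only [fresnelKernel_add_I, add_sub_cancel_left]
    _ = (∫ x in (0 : ℝ)..T, fresnelKernel (x + I)) - ∫ x in (0 : ℝ)..T, fresnelKernel x :=
        intervalIntegral.integral_sub htop hbottom
    _ = I * ∫ y in (0 : ℝ)..1, fresnelKernel (T + y * I) := by linear_combination -hboundary

end ContourKernel

section FresnelIntegrals

theorem norm_fresnelExp_ofReal_sub_one_le (t : ℝ) : ‖fresnelExp t - 1‖ ≤ π * t ^ 2 / 2 := by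
  have h := Real.norm_exp_I_mul_ofReal_sub_one_le (x := π * t ^ 2 / 2)
  rw [Real.norm_of_nonneg (by positivity)] at h
  convert h using 3
  rw [fresnelExp]
  push_cast
  ring_nf

theorem norm_fresnelIntegrand_ofReal_le {t : ℝ} (ht : 0 < t) :
    ‖fresnelIntegrand t‖ ≤ 2 / π * Real.exp (-π * t) := by
  have hsinh := mul_exp_half_le_two_mul_sinh (u := π * t) (by positivity)
  rw [← norm_sinh_ofReal (by positivity), Complex.ofReal_mul] at hsinh
  have hsq : (π * t) ^ 2 * Real.exp (π * t) ≤ 4 * ‖Complex.sinh (π * t)‖ ^ 2 := by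
    calc (π * t) ^ 2 * Real.exp (π * t) = (π * t * Real.exp (π * t / 2)) ^ 2 := by
          rw [mul_pow _ (Real.exp _), ← Real.exp_nat_mul]
          ring_nf
      _ ≤ (2 * ‖Complex.sinh (π * t)‖) ^ 2 := by gcongr
      _ = 4 * ‖Complex.sinh (π * t)‖ ^ 2 := by ring
  rw [fresnelIntegrand, norm_div, norm_pow, neg_mul, Real.exp_neg]
  calc ‖fresnelExp t - 1‖ / ‖Complex.sinh (π * t)‖ ^ 2
      ≤ (π * t ^ 2 / 2) / ((π * t) ^ 2 * Real.exp (π * t) / 4) := by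
        gcongr
        · exact norm_fresnelExp_ofReal_sub_one_le t
        · linarith
    _ = 2 / π * (Real.exp (π * t))⁻¹ := by field_simp; norm_num

theorem integrableOn_fresnelIntegrand :
    IntegrableOn (fun t : ℝ ↦ fresnelIntegrand t) (Ioi 0) := by
  have hmeas : Measurable fresnelIntegrand := by
    have := differentiable_fresnelExp.continuous.measurable
    unfold fresnelIntegrand
    fun_prop
  refine ((exp_neg_integrableOn_Ioi 0 pi_pos).const_mul (2 / π)).mono'
    (hmeas.comp Complex.measurable_ofReal).aestronglyMeasurable ?_
  filter_upwards [ae_restrict_mem measurableSet_Ioi] with t ht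
    using norm_fresnelIntegrand_ofReal_le ht

theorem integral_fresnelIntegrand_Ioi :
    ∫ t in Ioi (0 : ℝ), fresnelIntegrand t = I * fresnelValue := by
  refine tendsto_nhds_unique
    (intervalIntegral_tendsto_integral_Ioi 0 integrableOn_fresnelIntegrand tendsto_id) ?_
  simpa only [id_eq, integral_fresnelIntegrand_eq] using tendsto_integral_fresnelKernel.const_mul I

/-- The complex form `exp(iπx/2) / (exp(2π√x) - 1)` of Ramanujan's integrand after the substitution
`x = z²`, including the factor `2z` from `dx = 2z dz`. -/
noncomputable def fresnelPlanck (z : ℂ) : ℂ :=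
  2 * z * (fresnelExp z / (Complex.exp (2 * (π * z)) - 1))

/-- The boundary term of the integration by parts from `fresnelPlanck` to `fresnelIntegrand`. -/
noncomputable def fresnelBoundary (z : ℂ) : ℂ :=
  -(2 * I / π) * ((fresnelExp z - 1) / (Complex.exp (2 * (π * z)) - 1))

theorem hasDerivAt_fresnelBoundary {z : ℂ} (hs : Complex.sinh (π * z) ≠ 0) :
    HasDerivAt fresnelBoundary (fresnelPlanck z + I * fresnelIntegrand z) z := by
  have hexp := Complex.exp_ne_zero (π * z)
  have hden : Complex.exp (2 * (π * z)) - 1 ≠ 0 := by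
    rw [exp_two_mul_sub_one_eq_mul_sinh]
    simp [hs]
  have hderiv : HasDerivAt (fun z : ℂ ↦ Complex.exp (2 * (π * z)) - 1)
      (Complex.exp (2 * (π * z)) * (2 * π)) z := by
    simpa using ((((hasDerivAt_id z).const_mul (π : ℂ)).const_mul 2).cexp).sub_const 1
  have hsq : Complex.exp (2 * (π * z)) = Complex.exp (π * z) ^ 2 := by
    rw [← Complex.exp_nat_mul, Nat.cast_ofNat]
  refine ((((hasDerivAt_fresnelExp z).sub_const 1).div hderiv hden).const_mul
    (-(2 * I / π))).congr_deriv ?_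
  rw [fresnelPlanck, fresnelIntegrand, exp_two_mul_sub_one_eq_mul_sinh, hsq]
  field_simp
  linear_combination (-z * fresnelExp z * Complex.sinh (π * z)) * Complex.I_sq

theorem norm_fresnelExp_ofReal (t : ℝ) : ‖fresnelExp t‖ = 1 := by
  simp [norm_fresnelExp]

theorem norm_fresnelPlanck_ofReal_le {t : ℝ} (ht : 0 < t) :
    ‖fresnelPlanck t‖ ≤ 1 / π * Real.exp (-π * t) := by
  have hden := two_mul_mul_exp_le_norm_exp_two_mul_sub_one (u := π * t) (by positivity)
  rw [Complex.ofReal_mul] at hden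
  rw [fresnelPlanck, norm_mul, norm_mul, norm_div, norm_fresnelExp_ofReal, Complex.norm_ofNat,
    Complex.norm_of_nonneg ht.le, neg_mul, Real.exp_neg]
  calc 2 * t * (1 / ‖Complex.exp (2 * (π * t)) - 1‖)
      ≤ 2 * t * (1 / (2 * (π * t) * Real.exp (π * t))) := by gcongr
    _ = 1 / π * (Real.exp (π * t))⁻¹ := by field_simp

theorem norm_fresnelBoundary_ofReal_le {t : ℝ} (ht : 0 < t) :
    ‖fresnelBoundary t‖ ≤ 1 / (2 * π) * (t * Real.exp (-π * t)) := by
  have hden := two_mul_mul_exp_le_norm_exp_two_mul_sub_one (u := π * t) (by positivity)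
  rw [Complex.ofReal_mul] at hden
  have hconst : ‖-(2 * I / (π : ℂ))‖ = 2 / π := by simp [abs_of_pos pi_pos]
  rw [fresnelBoundary, norm_mul, norm_div, hconst, neg_mul, Real.exp_neg]
  calc 2 / π * (‖fresnelExp t - 1‖ / ‖Complex.exp (2 * (π * t)) - 1‖)
      ≤ 2 / π * ((π * t ^ 2 / 2) / (2 * (π * t) * Real.exp (π * t))) := by
        gcongr
        exact norm_fresnelExp_ofReal_sub_one_le t
    _ = 1 / (2 * π) * (t * (Real.exp (π * t))⁻¹) := by field_simp

theorem integrableOn_fresnelPlanck : IntegrableOn (fun t : ℝ ↦ fresnelPlanck t) (Ioi 0) := by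
  have hmeas : Measurable fresnelPlanck := by
    have := differentiable_fresnelExp.continuous.measurable
    unfold fresnelPlanck
    fun_prop
  refine ((exp_neg_integrableOn_Ioi 0 pi_pos).const_mul (1 / π)).mono'
    (hmeas.comp Complex.measurable_ofReal).aestronglyMeasurable ?_
  filter_upwards [ae_restrict_mem measurableSet_Ioi] with t ht
    using norm_fresnelPlanck_ofReal_le ht

theorem tendsto_fresnelBoundary_atTop :
    Tendsto (fun t : ℝ ↦ fresnelBoundary t) atTop (𝓝 0) := by
  refine squeeze_zero_norm' (a := fun t ↦ 1 / (2 * π) * (t * Real.exp (-π * t))) ?_ ?_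
  · filter_upwards [eventually_gt_atTop 0] with t ht using norm_fresnelBoundary_ofReal_le ht
  · simpa using (tendsto_rpow_mul_exp_neg_mul_atTop_nhds_zero 1 π pi_pos).const_mul (1 / (2 * π))

theorem fresnelBoundary_zero : fresnelBoundary 0 = 0 := by
  simp [fresnelBoundary]

theorem continuousWithinAt_fresnelBoundary_zero :
    ContinuousWithinAt (fun t : ℝ ↦ fresnelBoundary t) (Ici 0) 0 := by
  refine continuousWithinAt_Ioi_iff_Ici.1 ?_
  rw [ContinuousWithinAt, Complex.ofReal_zero, fresnelBoundary_zero]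
  refine squeeze_zero_norm' (a := fun t ↦ 1 / (2 * π) * (t * Real.exp (-π * t))) ?_ ?_
  · filter_upwards [self_mem_nhdsWithin] with t ht using norm_fresnelBoundary_ofReal_le ht
  · have hcont : Continuous fun t ↦ 1 / (2 * π) * (t * Real.exp (-π * t)) := by fun_prop
    simpa using (hcont.tendsto 0).mono_left nhdsWithin_le_nhds

theorem integral_fresnelPlanck_Ioi : ∫ t in Ioi (0 : ℝ), fresnelPlanck t = fresnelValue := by
  have hsinh (t : ℝ) (ht : t ∈ Ioi 0) : Complex.sinh (π * t) ≠ 0 := by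
    exact_mod_cast (Real.sinh_pos_iff.2 (mul_pos pi_pos ht)).ne'
  have hparts := integral_Ioi_of_hasDerivAt_of_tendsto continuousWithinAt_fresnelBoundary_zero
    (fun t ht ↦ (hasDerivAt_fresnelBoundary (hsinh t ht)).comp_ofReal)
    (integrableOn_fresnelPlanck.add (integrableOn_fresnelIntegrand.const_mul I))
    tendsto_fresnelBoundary_atTop
  rw [integral_add integrableOn_fresnelPlanck (integrableOn_fresnelIntegrand.const_mul I),
    integral_const_mul, integral_fresnelIntegrand_Ioi, Complex.ofReal_zero, fresnelBoundary_zero,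
    sub_zero] at hparts
  linear_combination hparts - fresnelValue * Complex.I_sq

end FresnelIntegrals

section RamanujanIntegral

theorem two_mul_smul_exp_div_eqOn_fresnelPlanck :
    EqOn (fun t : ℝ ↦ (2 * t) • (Complex.exp ((π * t ^ 2 / 2 : ℝ) * I) /
      (Real.exp (2 * π * √(t ^ 2)) - 1 : ℝ))) (fun t : ℝ ↦ fresnelPlanck t) (Ioi 0) := by
  intro t ht
  simp only [Real.sqrt_sq (le_of_lt ht), Complex.real_smul, fresnelPlanck, fresnelExp]
  push_cast
  ring_nf

theorem integrableOn_exp_mul_I_div_exp_sqrt_sub_one :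
    IntegrableOn (fun x : ℝ ↦
      Complex.exp ((π * x / 2 : ℝ) * I) / (Real.exp (2 * π * √x) - 1 : ℝ)) (Ioi 0) := by
  rw [← integrableOn_Ioi_comp_sq_iff,
    integrableOn_congr_fun two_mul_smul_exp_div_eqOn_fresnelPlanck measurableSet_Ioi]
  exact integrableOn_fresnelPlanck

theorem integral_exp_mul_I_div_exp_sqrt_sub_one :
    ∫ x in Ioi (0 : ℝ), Complex.exp ((π * x / 2 : ℝ) * I) / (Real.exp (2 * π * √x) - 1 : ℝ) =
      fresnelValue := by
  rw [← integral_Ioi_comp_sq,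
    setIntegral_congr_fun measurableSet_Ioi two_mul_smul_exp_div_eqOn_fresnelPlanck]
  exact integral_fresnelPlanck_Ioi

theorem re_fresnelValue : fresnelValue.re = 1 / (4 * π) := by
  have h : fresnelValue = ((1 : ℂ) + (π - 3 : ℝ) * I) / (4 * π : ℝ) := by
    rw [fresnelValue]; push_cast; rfl
  rw [h, Complex.div_ofReal_re]
  simp

end RamanujanIntegral

/-- Ramanujan's integral `R_C(0, 1/2)` converges and equals `1/(4π)`. -/
theorem ramanujan_RC_zero_half :
    IntegrableOn
      (fun x : ℝ => Real.cos (π * x / 2) / (Real.exp (2 * π * Real.sqrt x) - 1)) (Ioi 0) ∧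
    (∫ x in Ioi (0:ℝ), Real.cos (π * x / 2) / (Real.exp (2 * π * Real.sqrt x) - 1)) =
      1 / (4 * π) := by
  have hre (x : ℝ) :
      (Complex.exp ((π * x / 2 : ℝ) * I) / (Real.exp (2 * π * √x) - 1 : ℝ)).re =
        Real.cos (π * x / 2) / (Real.exp (2 * π * √x) - 1) := by
    rw [Complex.div_ofReal_re, Complex.exp_ofReal_mul_I_re]
  have hint := integrableOn_exp_mul_I_div_exp_sqrt_sub_one
  simp only [← hre]
  refine ⟨hint.re, ?_⟩
  rw [← re_fresnelValue, ← integral_exp_mul_I_div_exp_sqrt_sub_one]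
  exact integral_re hint
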